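/- arXiv:2506.07163 — 4 statements merged into one kernel-verified Lean document; each statement's English description precedes it below -/
import Mathlib

section
/- Let G be a finite directed multigraph and let μ and μ' be two multi-loops in G having the same edge multiplicity function (i.e. every directed edge of G is traversed the same total number of times by the loops of μ as by the loops of μ'). Then there exists a finite sequence of multi-loops μ = μ₀, μ₁, …, μ_n = μ' such that for each i ∈ {1, …, n} the multi-loops μ_{i−1} and μ_i are related by a resolution at some vertex of G. -/
/-- A (based) loop in the directed multigraph with edge set `E`, source map `src` and
target map `tgt`: a nonempty list of edges forming a closed directed walk. -/
def IsLoop {V E : Type*} (src tgt : E → V) (l : List E) : Prop :=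
  l ≠ [] ∧ ∀ i : Fin l.length,
    tgt (l.get i) =
      src (l.get ⟨(i.1 + 1) % l.length, Nat.mod_lt _ (lt_of_le_of_lt (Nat.zero_le _) i.isLt)⟩)

/-- Based loops up to cyclic rotation. -/
def loopSetoid {V E : Type*} (src tgt : E → V) : Setoid {l : List E // IsLoop src tgt l} where
  r a b := a.1.IsRotated b.1
  iseqv := ⟨fun a => List.IsRotated.refl a.1, fun h => h.symm, fun h h' => h.trans h'⟩

/-- A loop of the directed multigraph: a closed directed walk considered up to
cyclic rotation. -/
def Loop {V E : Type*} (src tgt : E → V) : Type _ := Quotient (loopSetoid src tgt)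

/-- The loop determined by a based loop. -/
def Loop.mk {V E : Type*} (src tgt : E → V) (l : List E) (h : IsLoop src tgt l) :
    Loop src tgt :=
  Quotient.mk (loopSetoid src tgt) ⟨l, h⟩

/-- The number of times the loop `c` traverses the edge `e`. -/
def Loop.edgeCount {V E : Type*} [DecidableEq E] {src tgt : E → V}
    (c : Loop src tgt) (e : E) : ℕ :=
  Quotient.lift (s := loopSetoid src tgt) (fun l : {l : List E // IsLoop src tgt l} => l.1.count e)
    (fun a b h => ((show a.1 ~r b.1 from h).perm).count_eq e) c

/-- The number of times the loop `c` visits the vertex `v`. -/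
def Loop.vertexCount {V E : Type*} [DecidableEq V] {src tgt : E → V}
    (c : Loop src tgt) (v : V) : ℕ :=
  Quotient.lift (s := loopSetoid src tgt) (fun l : {l : List E // IsLoop src tgt l} => (l.1.map src).count v)
    (fun a b h => (((show a.1 ~r b.1 from h).map src).perm).count_eq v) c

/-- A multi-loop: a finite multiset of loops. -/
abbrev MultiLoop {V E : Type*} (src tgt : E → V) := Multiset (Loop src tgt)

/-- The edge multiplicity function of a multi-loop: the total number of times the
edge `e` is traversed by the loops of `μ`. -/
def MultiLoop.edgeCount {V E : Type*} [DecidableEq E] {src tgt : E → V}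
    (μ : MultiLoop src tgt) (e : E) : ℕ :=
  (μ.map (fun c => Loop.edgeCount c e)).sum

/-- The total number of times the loops of `μ` visit the vertex `v`. -/
def MultiLoop.vertexCount {V E : Type*} [DecidableEq V] {src tgt : E → V}
    (μ : MultiLoop src tgt) (v : V) : ℕ :=
  (μ.map (fun c => Loop.vertexCount c v)).sum

/-- A multi-loop is embedded if its loops visit each vertex at most once in total. -/
def MultiLoop.Embedded {V E : Type*} [DecidableEq V] {src tgt : E → V}
    (μ : MultiLoop src tgt) : Prop :=
  ∀ v : V, MultiLoop.vertexCount μ v ≤ 1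

/-- `μ'` is obtained from `μ` by a resolution at the vertex `v`: two loops `c₁`, `c₂` of `μ`,
presented with starting points chosen so that `c₁` ends at `v` and `c₂` starts at `v`,
are replaced by the single concatenated loop `c₁ * c₂`. -/
def ResolutionAt {V E : Type*} {src tgt : E → V} (v : V) (μ μ' : MultiLoop src tgt) : Prop :=
  ∃ (l₁ l₂ : List E) (h₁ : IsLoop src tgt l₁) (h₂ : IsLoop src tgt l₂)
    (h₁₂ : IsLoop src tgt (l₁ ++ l₂)) (μ₀ : MultiLoop src tgt),
    (∃ e, l₁.getLast? = some e ∧ tgt e = v) ∧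
    (∃ e, l₂.head? = some e ∧ src e = v) ∧
    μ = Loop.mk src tgt l₁ h₁ ::ₘ Loop.mk src tgt l₂ h₂ ::ₘ μ₀ ∧
    μ' = Loop.mk src tgt (l₁ ++ l₂) h₁₂ ::ₘ μ₀

def Wk {V E : Type*} (src tgt : E → V) : V → List E → V → Prop
  | u, [], v => u = v
  | u, e :: l, v => src e = u ∧ Wk src tgt (tgt e) l v

section aux
variable {V E : Type*} {src tgt : E → V}

theorem Wk_append {a b : List E} {u v : V} :
    Wk src tgt u (a ++ b) v ↔ ∃ x, Wk src tgt u a x ∧ Wk src tgt x b v := by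
  induction a generalizing u with
  | nil => simp [Wk]
  | cons e l ih => simp [Wk, ih, and_assoc]

theorem Wk_cons_iff {e : E} {l : List E} {u v : V} :
    Wk src tgt u (e :: l) v ↔ src e = u ∧ List.IsChain (fun a b => tgt a = src b) (e :: l) ∧
      tgt ((e :: l).getLast (by simp)) = v := by
  induction l generalizing e u with
  | nil => simp [Wk]
  | cons f l ih =>
    rw [Wk, ih, List.isChain_cons_cons, List.getLast_cons_cons]
    constructor
    · rintro ⟨a, b, c, d⟩; exact ⟨a, ⟨b.symm, c⟩, d⟩
    · rintro ⟨a, ⟨b, c⟩, d⟩; exact ⟨a, b.symm, c, d⟩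

theorem isLoop_iff {l : List E} : IsLoop src tgt l ↔ l ≠ [] ∧ ∃ u, Wk src tgt u l u := by
  cases l with
  | nil => simp [IsLoop]
  | cons e l =>
    simp only [Wk_cons_iff, List.isChain_iff_getElem, IsLoop, List.getLast_eq_getElem]
    constructor
    · rintro ⟨h0, h⟩
      refine ⟨h0, src e, rfl, ?_, ?_⟩
      · intro i hi
        have := h ⟨i, by omega⟩
        simpa only [List.get_eq_getElem, Nat.mod_eq_of_lt hi] using this
      · have := h ⟨l.length, by simp⟩
        simpa using this
    · rintro ⟨h0, u, h1, h2, h3⟩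
      refine ⟨h0, ?_⟩
      rintro ⟨i, hi⟩
      by_cases hi' : i + 1 < (e :: l).length
      · have := h2 i hi'
        simpa only [List.get_eq_getElem, Nat.mod_eq_of_lt hi'] using this
      · have : i = l.length := by simp at hi hi'; omega
        subst this
        rw [← h1] at h3
        simpa using h3

theorem mk_rot {l l' : List E} (h : IsLoop src tgt l) (h' : IsLoop src tgt l') (hr : l ~r l') :
    Loop.mk src tgt l h = Loop.mk src tgt l' h' := Quotient.sound hr

theorem exists_mk (c : Loop src tgt) : ∃ l h, c = Loop.mk src tgt l h := by
  induction c using Quotient.inductionOn with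
  | h a => exact ⟨a.1, a.2, rfl⟩

abbrev RR (src tgt : E → V) : MultiLoop src tgt → MultiLoop src tgt → Prop :=
  Relation.ReflTransGen
      (fun a b : MultiLoop src tgt => ∃ v : V, ResolutionAt v a b ∨ ResolutionAt v b a)

theorem RR_cons {μ ν : MultiLoop src tgt} (c : Loop src tgt) (h : RR src tgt μ ν) :
    RR src tgt (c ::ₘ μ) (c ::ₘ ν) := by
  have key : ∀ (v : V) (a b : MultiLoop src tgt), ResolutionAt v a b →
      ResolutionAt v (c ::ₘ a) (c ::ₘ b) := by
    rintro v a b ⟨l₁, l₂, h₁, h₂, h₁₂, μ₀, x, y, rfl, rfl⟩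
    refine ⟨l₁, l₂, h₁, h₂, h₁₂, c ::ₘ μ₀, x, y, ?_, ?_⟩
    · rw [Multiset.cons_swap c, Multiset.cons_swap c]
    · rw [Multiset.cons_swap c]
  refine Relation.ReflTransGen.lift (fun x => c ::ₘ x) ?_ _ _ h
  rintro a b ⟨v, h | h⟩
  · exact ⟨v, Or.inl (key _ _ _ h)⟩
  · exact ⟨v, Or.inr (key _ _ _ h)⟩

theorem res {a b : List E} {u : V} (ha : a ≠ []) (hb : b ≠ []) (wa : Wk src tgt u a u)
    (wb : Wk src tgt u b u) (h₁ : IsLoop src tgt a) (h₂ : IsLoop src tgt b)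
    (h₁₂ : IsLoop src tgt (a ++ b)) (ν : MultiLoop src tgt) :
    ResolutionAt u (Loop.mk src tgt a h₁ ::ₘ Loop.mk src tgt b h₂ ::ₘ ν)
      (Loop.mk src tgt (a ++ b) h₁₂ ::ₘ ν) := by
  refine ⟨a, b, h₁, h₂, h₁₂, ν, ?_, ?_, rfl, rfl⟩
  · cases a with
    | nil => simp at ha
    | cons e l => exact ⟨_, List.getLast?_eq_some_getLast ha, (Wk_cons_iff.1 wa).2.2⟩
  · cases b with
    | nil => simp at hb
    | cons e l => exact ⟨e, rfl, wb.1⟩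

variable [DecidableEq E]

theorem ec_mk {l : List E} (h : IsLoop src tgt l) (e : E) :
    Loop.edgeCount (Loop.mk src tgt l h) e = l.count e := rfl

theorem ec_cons (c : Loop src tgt) (μ : MultiLoop src tgt) (e : E) :
    MultiLoop.edgeCount (c ::ₘ μ) e = Loop.edgeCount c e + MultiLoop.edgeCount μ e := by
  simp [MultiLoop.edgeCount]

theorem ec_res {v : V} {a b : MultiLoop src tgt} (h : ResolutionAt v a b) (e : E) :
    MultiLoop.edgeCount a e = MultiLoop.edgeCount b e := by
  obtain ⟨l₁, l₂, h₁, h₂, h₁₂, μ₀, x, y, rfl, rfl⟩ := h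
  simp only [ec_cons, ec_mk, List.count_append, add_assoc]

theorem ec_RR {a b : MultiLoop src tgt} (h : RR src tgt a b) (e : E) :
    MultiLoop.edgeCount a e = MultiLoop.edgeCount b e := by
  induction h with
  | refl => rfl
  | tail _ h ih =>
    obtain ⟨v, h | h⟩ := h
    · rw [ih, ec_res h]
    · rw [ih, ec_res h]

theorem exists_loop {μ : MultiLoop src tgt} {f : E} (h : 0 < MultiLoop.edgeCount μ f) :
    ∃ b hb ν, μ = Loop.mk src tgt (f :: b) hb ::ₘ ν := by
  have : ∃ c ∈ μ, 0 < Loop.edgeCount c f := by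
    by_contra! hc
    have : MultiLoop.edgeCount μ f = 0 := by
      unfold MultiLoop.edgeCount
      rw [Multiset.sum_eq_zero]
      intro x hx
      obtain ⟨c, hc', rfl⟩ := Multiset.mem_map.1 hx
      have := hc c hc'
      omega
    omega
  obtain ⟨c, hc, hf⟩ := this
  obtain ⟨ν, rfl⟩ := Multiset.exists_cons_of_mem hc
  obtain ⟨l, hl, rfl⟩ := exists_mk c
  rw [ec_mk, List.count_pos_iff] at hf
  obtain ⟨s, t, rfl⟩ := List.append_of_mem hf
  have hl' := hl
  rw [isLoop_iff] at hl'
  obtain ⟨-, u, hu⟩ := hl'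
  obtain ⟨x, h1, h2⟩ := Wk_append.1 hu
  have hL : IsLoop src tgt (f :: (t ++ s)) :=
    isLoop_iff.2 ⟨by simp, x, by
      rw [← List.cons_append]; exact Wk_append.2 ⟨u, h2, h1⟩⟩
  refine ⟨t ++ s, hL, ν, ?_⟩
  rw [mk_rot hl hL]
  simpa using (List.isRotated_append (l := s) (l' := f :: t))

theorem prefix_lemma (μ : MultiLoop src tgt) (w : List E) : w ≠ [] → ∀ u v : V,
    Wk src tgt u w v → (∀ e, w.count e ≤ MultiLoop.edgeCount μ e) →
    ∃ r h ν, RR src tgt μ (Loop.mk src tgt (w ++ r) h ::ₘ ν) := by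
  induction w using List.reverseRecOn with
  | nil => intro h; exact absurd rfl h
  | append_singleton w f ih =>
    intro _ u v hw hc
    by_cases hw0 : w = []
    · subst hw0
      have := hc f
      obtain ⟨b, hb, ν, rfl⟩ := exists_loop (μ := μ) (f := f) (by simp at this; omega)
      exact ⟨b, hb, ν, Relation.ReflTransGen.refl⟩
    obtain ⟨x, hwx, hfx⟩ := Wk_append.1 hw
    obtain ⟨r, hL, ν, hR⟩ := ih hw0 u x hwx (fun e => by
      have := hc e
      rw [List.count_append] at this; omega)
    have hcf := hc f
    rw [ec_RR hR, ec_cons, ec_mk] at hcf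
    simp only [List.count_append, List.count_singleton_self] at hcf
    obtain ⟨-, u', hu'⟩ := isLoop_iff.1 hL
    obtain ⟨x', hwx', hrx'⟩ := Wk_append.1 hu'
    obtain ⟨rfl, rfl⟩ : u' = u ∧ x' = x := by
      cases w with
      | nil => simp at hw0
      | cons e l =>
        rw [Wk_cons_iff] at hwx hwx'
        exact ⟨hwx'.1.symm.trans hwx.1, hwx'.2.2.symm.trans hwx.2.2⟩
    by_cases hr : f ∈ r
    · obtain ⟨a, b, rfl⟩ := List.append_of_mem hr
      by_cases ha : a = []
      · subst ha
        exact ⟨b, by simpa using hL, ν, by simpa using hR⟩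
      obtain ⟨y, hay, hfy⟩ := Wk_append.1 hrx'
      obtain rfl : y = x' := hfy.1.symm.trans hfx.1
      have w2 : Wk src tgt y ((f :: b) ++ w) y := Wk_append.2 ⟨_, hfy, hwx'⟩
      have l1 : IsLoop src tgt a := isLoop_iff.2 ⟨ha, _, hay⟩
      have l2 : IsLoop src tgt ((f :: b) ++ w) := isLoop_iff.2 ⟨by simp, _, w2⟩
      have l12 : IsLoop src tgt (a ++ ((f :: b) ++ w)) :=
        isLoop_iff.2 ⟨by simp, _, Wk_append.2 ⟨_, hay, w2⟩⟩
      have l3 : IsLoop src tgt (w ++ [f] ++ b) :=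
        isLoop_iff.2 ⟨by simp, _, by simpa using Wk_append.2 ⟨_, hwx', hfy⟩⟩
      have hres := res ha (by simp) hay w2 l1 l2 l12 ν
      refine ⟨b, l3, Loop.mk src tgt a l1 ::ₘ ν, hR.tail ⟨y, Or.inr ?_⟩⟩
      rw [Multiset.cons_swap, mk_rot l3 l2, mk_rot hL l12]
      · exact hres
      · simpa using (List.isRotated_append (l := w) (l' := a ++ f :: b))
      · simpa using (List.isRotated_append (l := w) (l' := f :: b))
    · have : r.count f = 0 := List.count_eq_zero.2 hr
      obtain ⟨b, hb, ν', rfl⟩ := exists_loop (μ := ν) (f := f) (by omega)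
      obtain ⟨-, y, hy⟩ := isLoop_iff.1 hb
      obtain rfl : y = x' := hy.1.symm.trans hfx.1
      have w1 : Wk src tgt y (r ++ w) y := Wk_append.2 ⟨_, hrx', hwx'⟩
      have l1 : IsLoop src tgt (r ++ w) := isLoop_iff.2 ⟨by simp [hw0], _, w1⟩
      have l12 : IsLoop src tgt ((r ++ w) ++ (f :: b)) :=
        isLoop_iff.2 ⟨by simp, _, Wk_append.2 ⟨_, w1, hy⟩⟩
      have l3 : IsLoop src tgt (w ++ [f] ++ (b ++ r)) :=
        isLoop_iff.2 ⟨by simp, u', by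
          have := Wk_append.2 ⟨_, Wk_append.2 ⟨_, hwx', hy⟩, hrx'⟩
          simpa using this⟩
      have hres := res (by simp [hw0]) (by simp) w1 hy l1 hb l12 ν'
      refine ⟨b ++ r, l3, ν', hR.tail ⟨y, Or.inl ?_⟩⟩
      rw [mk_rot l3 l12, mk_rot hL l1]
      · exact hres
      · exact List.isRotated_append
      · simpa using (List.isRotated_append (l := w ++ f :: b) (l' := r))

theorem loop_lemma (μ : MultiLoop src tgt) (c : Loop src tgt)
    (hc : ∀ e, Loop.edgeCount c e ≤ MultiLoop.edgeCount μ e) :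
    ∃ ν, RR src tgt μ (c ::ₘ ν) := by
  obtain ⟨w, hw, rfl⟩ := exists_mk c
  obtain ⟨w0, u, hu⟩ := isLoop_iff.1 hw
  obtain ⟨r, hL, ν, hR⟩ := prefix_lemma μ w w0 u u hu hc
  by_cases hr : r = []
  · subst hr
    exact ⟨ν, by simpa using hR⟩
  obtain ⟨-, u', hu'⟩ := isLoop_iff.1 hL
  obtain ⟨x', hwx', hrx'⟩ := Wk_append.1 hu'
  obtain ⟨rfl, rfl⟩ : u' = u ∧ x' = u := by
    cases w with
    | nil => simp at w0
    | cons e l =>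
      rw [Wk_cons_iff] at hu hwx'
      exact ⟨hwx'.1.symm.trans hu.1, hwx'.2.2.symm.trans hu.2.2⟩
  have l2 : IsLoop src tgt r := isLoop_iff.2 ⟨hr, _, hrx'⟩
  exact ⟨Loop.mk src tgt r l2 ::ₘ ν, hR.tail ⟨_, Or.inr (res w0 hr hu hrx' hw l2 hL ν)⟩⟩

theorem chain_aux (μ' : MultiLoop src tgt) : ∀ μ : MultiLoop src tgt,
    (∀ e : E, MultiLoop.edgeCount μ e = MultiLoop.edgeCount μ' e) → RR src tgt μ μ' := by
  induction μ' using Multiset.induction with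
  | empty =>
    intro μ h
    obtain rfl | ⟨c, hc⟩ := Multiset.empty_or_exists_mem μ
    · exact Relation.ReflTransGen.refl
    · exfalso
      obtain ⟨ν, rfl⟩ := Multiset.exists_cons_of_mem hc
      obtain ⟨l, hl, rfl⟩ := exists_mk c
      cases l with
      | nil => exact hl.1 rfl
      | cons e l =>
        have := h e
        rw [ec_cons, ec_mk] at this
        simp [MultiLoop.edgeCount] at this
  | cons c μ' ih =>
    intro μ h
    obtain ⟨ν, hR⟩ := loop_lemma μ c (fun e => by rw [h, ec_cons]; omega)
    refine hR.trans (RR_cons c (ih ν fun e => ?_))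
    have h1 := h e
    rw [ec_RR hR, ec_cons, ec_cons] at h1
    omega

end aux

/-- If two multi-loops of a finite directed multigraph have the same
edge multiplicity function, then they are connected by a finite sequence of multi-loops
in which consecutive terms are related by a resolution at some vertex. -/
theorem multiloop_resolution_chain {V E : Type*} [Fintype V] [Fintype E] [DecidableEq E]
    (src tgt : E → V) (μ μ' : MultiLoop src tgt)
    (h : ∀ e : E, MultiLoop.edgeCount μ e = MultiLoop.edgeCount μ' e) :
    Relation.ReflTransGen
      (fun a b : MultiLoop src tgt => ∃ v : V, ResolutionAt v a b ∨ ResolutionAt v b a)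
      μ μ' := by
  exact chain_aux μ' μ h
end

section
/- Let G be a finite directed multigraph and let μ be an embedded multi-loop in G. Then μ is the unique multi-loop with its edge multiplicity function: any multi-loop μ' in G whose edge multiplicity function equals that of μ satisfies μ' = μ (as multisets of loops, with loops considered up to cyclic rotation). -/
theorem aux_loop_eq {V E : Type*} {src tgt : E → V} {l l' : List E}
    (hl : IsLoop src tgt l) (hl' : IsLoop src tgt l') (nd : l.Nodup) (nd' : l'.Nodup)
    (inj : ∀ e ∈ l, ∀ f ∈ l', src e = src f → e = f)
    (e : E) (he : e ∈ l) (he' : e ∈ l') : l ~r l' := by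
  obtain ⟨k, hk, rfl⟩ := List.getElem_of_mem he
  obtain ⟨k', hk', hkk⟩ := List.getElem_of_mem he'
  have hn : 0 < l.length := by omega
  have hn' : 0 < l'.length := by omega
  have step : ∀ i : ℕ, l[(i + k) % l.length]'(Nat.mod_lt _ hn)
      = l'[(i + k') % l'.length]'(Nat.mod_lt _ hn') := by
    intro i
    induction i with
    | zero => simp [Nat.mod_eq_of_lt hk, Nat.mod_eq_of_lt hk', hkk]
    | succ i ih =>
      have h1 := hl.2 ⟨(i + k) % l.length, Nat.mod_lt _ hn⟩
      have h2 := hl'.2 ⟨(i + k') % l'.length, Nat.mod_lt _ hn'⟩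
      simp only [List.get_eq_getElem, Nat.mod_add_mod] at h1 h2
      apply inj _ (List.getElem_mem _) _ (List.getElem_mem _)
      simp only [show i + 1 + k = i + k + 1 by omega, show i + 1 + k' = i + k' + 1 by omega]
      rw [← h1, ← h2, ih]
  have d1 : l'.length ∣ l.length := by
    have h1 := step l.length
    have h0 := step 0
    simp only [Nat.add_mod_left, Nat.zero_add] at h1 h0
    rw [h0] at h1
    have := (nd'.getElem_inj_iff).1 h1
    have h3 : 0 + k' ≡ l.length + k' [MOD l'.length] := by simpa [Nat.ModEq] using this
    exact (Nat.modEq_zero_iff_dvd).1 (Nat.ModEq.add_right_cancel' _ h3).symm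
  have d2 : l.length ∣ l'.length := by
    have h1 := step l'.length
    have h0 := step 0
    simp only [Nat.add_mod_left, Nat.zero_add] at h1 h0
    rw [← h0] at h1
    have := (nd.getElem_inj_iff).1 h1
    have h3 : l'.length + k ≡ 0 + k [MOD l.length] := by simpa [Nat.ModEq] using this
    exact (Nat.modEq_zero_iff_dvd).1 (Nat.ModEq.add_right_cancel' _ h3)
  have hlen : l.length = l'.length := Nat.dvd_antisymm d2 d1
  have : l.rotate k = l'.rotate k' := by
    apply List.ext_getElem
    · simp [hlen]
    · intro i h1 h2
      rw [List.getElem_rotate, List.getElem_rotate]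
      exact step i
  exact (List.IsRotated.forall l k).symm.trans (this ▸ List.IsRotated.forall l' k')

theorem aux_cons {V E : Type*} [DecidableEq E] {src tgt : E → V}
    (c : Loop src tgt) (μ : MultiLoop src tgt) (e : E) :
    MultiLoop.edgeCount (c ::ₘ μ) e = c.edgeCount e + MultiLoop.edgeCount μ e := by
  simp [MultiLoop.edgeCount]

theorem aux_exists {V E : Type*} [DecidableEq E] {src tgt : E → V}
    (c : Loop src tgt) : ∃ e, 0 < c.edgeCount e := by
  induction c using Quotient.inductionOn with
  | h l =>
    obtain ⟨e, he⟩ := List.exists_mem_of_ne_nil _ l.2.1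
    exact ⟨e, List.count_pos_iff.2 he⟩

theorem aux_unique {V E : Type*} [DecidableEq E] {src tgt : E → V}
    (μ : MultiLoop src tgt) : ∀ (μ' : MultiLoop src tgt)
    (_ : ∀ e, MultiLoop.edgeCount μ e ≤ 1)
    (_ : ∀ e f, 0 < MultiLoop.edgeCount μ e → 0 < MultiLoop.edgeCount μ f →
      src e = src f → e = f)
    (_ : ∀ e : E, MultiLoop.edgeCount μ' e = MultiLoop.edgeCount μ e), μ' = μ := by
  induction μ using Multiset.induction_on with
  | empty =>
    intro μ' _ _ h
    by_contra hne
    obtain ⟨c, hc⟩ := Multiset.exists_mem_of_ne_zero hne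
    obtain ⟨μ'', rfl⟩ := Multiset.exists_cons_of_mem hc
    obtain ⟨e, he⟩ := aux_exists c
    have := h e
    rw [aux_cons] at this
    simp [MultiLoop.edgeCount] at this
    omega
  | cons c μ ih =>
    intro μ' h1 h2 h
    obtain ⟨e, he⟩ := aux_exists c
    have hpos : 0 < MultiLoop.edgeCount μ' e := by rw [h, aux_cons]; omega
    obtain ⟨c', hc', he'⟩ : ∃ c' ∈ μ', 0 < c'.edgeCount e := by
      by_contra! hcon
      have : MultiLoop.edgeCount μ' e = 0 := by
        apply Multiset.sum_eq_zero
        intro x hx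
        obtain ⟨c', hc', rfl⟩ := Multiset.mem_map.1 hx
        have := hcon c' hc'
        omega
      omega
    obtain ⟨μ'', rfl⟩ := Multiset.exists_cons_of_mem hc'
    have hcc : c = c' := by
      have b1 : ∀ f, c.edgeCount f ≤ MultiLoop.edgeCount (c ::ₘ μ) f := by
        intro f; rw [aux_cons]; omega
      have b2 : ∀ f, c'.edgeCount f ≤ MultiLoop.edgeCount (c ::ₘ μ) f := by
        intro f; rw [← h, aux_cons]; omega
      clear h hc' hpos ih
      generalize MultiLoop.edgeCount (c ::ₘ μ) = m at *
      induction c using Quotient.inductionOn with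
      | h l =>
      induction c' using Quotient.inductionOn with
      | h l' =>
      change ∀ f, l.1.count f ≤ _ at b1
      change ∀ f, l'.1.count f ≤ _ at b2
      apply Quotient.sound
      refine aux_loop_eq l.2 l'.2 (List.nodup_iff_count_le_one.2 fun f => (b1 f).trans (h1 f))
        (List.nodup_iff_count_le_one.2 fun f => (b2 f).trans (h1 f)) ?_ e
        (List.count_pos_iff.1 he) (List.count_pos_iff.1 he')
      intro a ha f hf
      exact h2 a f ((List.count_pos_iff.2 ha).trans_le (b1 a))
        ((List.count_pos_iff.2 hf).trans_le (b2 f))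
    subst hcc
    rw [ih μ'']
    · intro e; have := h1 e; rw [aux_cons] at this; omega
    · intro e f h3 h4
      apply h2 <;> rw [aux_cons] <;> omega
    · intro e; have := h e; rw [aux_cons, aux_cons] at this; omega

theorem aux_count {V E : Type*} [DecidableEq V] [DecidableEq E] (src : E → V)
    (e f : E) (hs : src e = src f) (hne : e ≠ f) (l : List E) :
    l.count e + l.count f ≤ (l.map src).count (src e) := by
  induction l with
  | nil => simp
  | cons a l ih =>
    simp only [List.map_cons, List.count_cons, beq_iff_eq]
    grind

theorem aux_vertex {V E : Type*} [DecidableEq V] [DecidableEq E] {src tgt : E → V}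
    (e f : E) (hs : src e = src f) (hne : e ≠ f) (μ : MultiLoop src tgt) :
    MultiLoop.edgeCount μ e + MultiLoop.edgeCount μ f ≤ MultiLoop.vertexCount μ (src e) := by
  unfold MultiLoop.edgeCount MultiLoop.vertexCount
  rw [← Multiset.sum_map_add]
  apply Multiset.sum_map_le_sum_map
  intro c _
  induction c using Quotient.inductionOn with
  | h l => exact aux_count src e f hs hne l.1

theorem aux_vertex_one {V E : Type*} [DecidableEq V] [DecidableEq E] {src tgt : E → V}
    (e : E) (μ : MultiLoop src tgt) :
    MultiLoop.edgeCount μ e ≤ MultiLoop.vertexCount μ (src e) := by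
  unfold MultiLoop.edgeCount MultiLoop.vertexCount
  apply Multiset.sum_map_le_sum_map
  intro c _
  induction c using Quotient.inductionOn with
  | h l => exact List.count_le_count_map

/-- An embedded multi-loop of a finite directed multigraph is the unique
multi-loop with its edge multiplicity function. -/
theorem embedded_multiloop_unique {V E : Type*} [Fintype V] [Fintype E]
    [DecidableEq V] [DecidableEq E]
    (src tgt : E → V) (μ : MultiLoop src tgt)
    (hemb : MultiLoop.Embedded μ)
    (μ' : MultiLoop src tgt)
    (h : ∀ e : E, MultiLoop.edgeCount μ' e = MultiLoop.edgeCount μ e) :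
    μ' = μ := by
  refine aux_unique μ μ' (fun e => (aux_vertex_one e μ).trans (hemb _)) ?_ h
  intro e f he hf hs
  by_contra hne
  have h1 := aux_vertex e f hs hne μ
  have h2 := hemb (src e)
  omega
end

section
/- Let G be a finite directed multigraph and let α be a function from the edges of G to the natural numbers satisfying the Kirchhoff condition (at every vertex the α-weighted in-degree equals the α-weighted out-degree). For each edge e consider α(e) labelled copies e_1, …, e_{α(e)} of e, and for each vertex v let a 'matching at v' be a bijection from the set of copies of edges terminating at v to the set of copies of edges originating at v. Then: (a) every family σ = (σ_v)_v of matchings, one at each vertex, determines a multi-loop μ_σ with edge multiplicity function α, obtained by following each edge-copy to its successor under the matchings; (b) every multi-loop with edge multiplicity function α equals μ_σ for some family σ of matchings; and (c) if two families σ and σ' agree except that σ'_v is the composition of σ_v with a single transposition at one vertex v, then μ_σ and μ_{σ'} are related by a resolution at v. -/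
/-- The labelled copies of edges: `α e` copies of each edge `e`. -/
abbrev Copies {E : Type*} (α : E → ℕ) : Type _ := Σ e : E, Fin (α e)

/-- The edge underlying a copy. -/
def Copies.edge {E : Type*} {α : E → ℕ} (c : Copies α) : E := c.1

/-- Copies of edges terminating at the vertex `v`. -/
abbrev InCopies {V E : Type*} (tgt : E → V) (α : E → ℕ) (v : V) : Type _ :=
  {c : Copies α // tgt c.1 = v}

/-- Copies of edges originating at the vertex `v`. -/
abbrev OutCopies {V E : Type*} (src : E → V) (α : E → ℕ) (v : V) : Type _ :=
  {c : Copies α // src c.1 = v}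

/-- A family of matchings: for each vertex `v`, a bijection from the copies of edges
terminating at `v` to the copies of edges originating at `v`. -/
abbrev MatchingFamily {V E : Type*} (src tgt : E → V) (α : E → ℕ) : Type _ :=
  ∀ v : V, InCopies tgt α v ≃ OutCopies src α v

/-- The successor of an edge-copy under the family of matchings `σ`. -/
def succCopy {V E : Type*} {src tgt : E → V} {α : E → ℕ}
    (σ : MatchingFamily src tgt α) (c : Copies α) : Copies α :=
  ((σ (tgt c.1)) ⟨c, rfl⟩).1

/-- A based cycle of edge-copies following the matchings `σ`: each entry is followed
(cyclically) by its successor under `σ`. -/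
def IsSigmaCycle {V E : Type*} {src tgt : E → V} {α : E → ℕ}
    (σ : MatchingFamily src tgt α) (L : List (Copies α)) : Prop :=
  L ≠ [] ∧ ∀ i : Fin L.length,
    L.get ⟨(i.1 + 1) % L.length, Nat.mod_lt _ (lt_of_le_of_lt (Nat.zero_le _) i.isLt)⟩ =
      succCopy σ (L.get i)

/-- The multi-loop `μ` is obtained by following each edge-copy to its successor under the
matchings `σ`: there is a multiset of cycles of edge-copies, each following `σ`, using
each edge-copy exactly once, whose underlying edge lists give exactly the loops of `μ`. -/
def Traces {V E : Type*} [DecidableEq E] {src tgt : E → V} {α : E → ℕ}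
    (σ : MatchingFamily src tgt α) (μ : MultiLoop src tgt) : Prop :=
  ∃ Ls : Multiset {L : List (Copies α) //
      IsSigmaCycle σ L ∧ IsLoop src tgt (L.map Sigma.fst)},
    (∀ c : Copies α, (Ls.map (fun L => L.1.count c)).sum = 1) ∧
    μ = Ls.map (fun L => Loop.mk src tgt (L.1.map Sigma.fst) L.2.2)

namespace MFM

def Path {X : Type*} (f : X → X) : X → List X → X → Prop
  | x, [], y => x = y
  | x, z :: L, y => z = x ∧ Path f (f x) L y

def Cyc {X : Type*} (f : X → X) (L : List X) : Prop := L ≠ [] ∧ ∃ x, Path f x L x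

theorem path_append {X : Type*} (f : X → X) (A B : List X) (x y : X) :
    Path f x (A ++ B) y ↔ ∃ z, Path f x A z ∧ Path f z B y := by
  induction A generalizing x with
  | nil => simp [Path]
  | cons a A ih => simp [Path, ih, and_assoc]

theorem path_congr {X : Type*} (f g : X → X) (A : List X) (h : ∀ c ∈ A, f c = g c) (x y : X) :
    Path f x A y ↔ Path g x A y := by
  induction A generalizing x with
  | nil => simp [Path]
  | cons a A ih =>
    simp only [Path]
    constructor
    · rintro ⟨rfl, h2⟩
      refine ⟨rfl, ?_⟩
      rw [← h a (by simp)]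
      exact (ih (fun c hc => h c (by simp [hc])) _).1 h2
    · rintro ⟨rfl, h2⟩
      refine ⟨rfl, ?_⟩
      rw [h a (by simp)]
      exact (ih (fun c hc => h c (by simp [hc])) _).2 h2

theorem path_map {X : Type*} (f : X → X) (t : List X) (z y : X) :
    Path f z (z :: t) y ↔ (z :: t).map f = t ++ [y] := by
  induction t generalizing z with
  | nil => simp [Path]
  | cons w t ih =>
    have := ih w
    simp only [Path, List.map_cons, List.cons_append, true_and, List.cons.injEq] at this ⊢
    constructor
    · rintro ⟨rfl, h⟩; exact ⟨rfl, this.1 h⟩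
    · rintro ⟨rfl, h⟩; exact ⟨rfl, this.2 h⟩

theorem cyc_iff {X : Type*} (f : X → X) (L : List X) :
    Cyc f L ↔ L ≠ [] ∧ L.map f = L.rotate 1 := by
  cases L with
  | nil => simp [Cyc]
  | cons x t =>
    rw [List.rotate_cons_succ, List.rotate_zero, ← path_map]
    simp only [Cyc]
    refine and_congr_right fun _ => ?_
    constructor
    · rintro ⟨y, h⟩
      have : x = y := h.1
      subst this; exact h
    · exact fun h => ⟨x, h⟩

theorem cyc_comm {X : Type*} {f : X → X} {A B : List X} (h : Cyc f (A ++ B)) : Cyc f (B ++ A) := by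
  obtain ⟨h1, x, h2⟩ := h
  obtain ⟨z, h3, h4⟩ := (path_append ..).1 h2
  refine ⟨by simpa [and_comm] using h1, z, (path_append ..).2 ⟨x, h4, h3⟩⟩

theorem isLoop_iff {V E : Type*} (src tgt : E → V) (l : List E) :
    IsLoop src tgt l ↔ l ≠ [] ∧ l.map tgt = (l.rotate 1).map src := by
  unfold IsLoop
  refine and_congr_right fun _ => ?_
  constructor
  · intro h
    apply List.ext_getElem (by simp)
    intro i h1 h2
    have := h ⟨i, by simpa using h1⟩
    simpa [List.getElem_rotate] using this
  · intro h i
    have := List.getElem_of_eq h (i := i.1) (by simp)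
    simpa [List.getElem_rotate] using this

theorem isSigmaCycle_iff {V E : Type*} {src tgt : E → V} {α : E → ℕ}
    (σ : MatchingFamily src tgt α) (L : List (Copies α)) :
    IsSigmaCycle σ L ↔ Cyc (succCopy σ) L := by
  rw [cyc_iff]
  unfold IsSigmaCycle
  refine and_congr_right fun _ => ?_
  constructor
  · intro h
    apply List.ext_getElem (by simp)
    intro i h1 h2
    have := h ⟨i, by simpa using h1⟩
    simpa [List.getElem_rotate] using this.symm
  · intro h i
    have := List.getElem_of_eq h (i := i.1) (by simp)
    simpa [List.getElem_rotate] using this.symm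

theorem src_succ {V E : Type*} {src tgt : E → V} {α : E → ℕ}
    (σ : MatchingFamily src tgt α) (c : Copies α) : src (succCopy σ c).1 = tgt c.1 :=
  ((σ (tgt c.1)) ⟨c, rfl⟩).2

theorem cyc_isLoop {V E : Type*} {src tgt : E → V} {α : E → ℕ}
    (σ : MatchingFamily src tgt α) (L : List (Copies α)) (h : Cyc (succCopy σ) L) :
    IsLoop src tgt (L.map Sigma.fst) := by
  rw [cyc_iff] at h
  rw [isLoop_iff]
  refine ⟨by simpa using h.1, ?_⟩
  rw [← List.map_rotate, ← h.2]
  simp [src_succ]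

def toCyc {V E : Type*} {src tgt : E → V} : Loop src tgt → Cycle E :=
  Quotient.lift (s := loopSetoid src tgt)
    (fun l : {l : List E // IsLoop src tgt l} => (l.1 : Cycle E))
    (fun _ _ h => Cycle.coe_eq_coe.2 h)

theorem toCyc_mk {V E : Type*} {src tgt : E → V} (l : List E) (h : IsLoop src tgt l) :
    toCyc (Loop.mk src tgt l h) = (l : Cycle E) := rfl

theorem toCyc_inj {V E : Type*} {src tgt : E → V} :
    Function.Injective (toCyc : Loop src tgt → Cycle E) := by
  rintro ⟨a⟩ ⟨b⟩ h
  exact Quotient.sound (s := loopSetoid src tgt) (Cycle.coe_eq_coe.1 h)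

def T {X : Type*} [DecidableEq X] (f : X → X) (Ls : Multiset (List X)) : Prop :=
  (∀ L ∈ Ls, Cyc f L) ∧ ∀ c, (Ls.map (fun L => L.count c)).sum = 1

theorem traces_iff {V E : Type*} [DecidableEq E] {src tgt : E → V} {α : E → ℕ}
    (σ : MatchingFamily src tgt α) (μ : MultiLoop src tgt) :
    Traces σ μ ↔ ∃ Ls, T (succCopy σ) Ls ∧
      μ.map toCyc = Ls.map (fun L => ((L.map Sigma.fst : List E) : Cycle E)) := by
  constructor
  · rintro ⟨Ls, h1, rfl⟩
    refine ⟨Ls.map Subtype.val, ⟨?_, ?_⟩, ?_⟩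
    · intro L hL
      obtain ⟨M, _, rfl⟩ := Multiset.mem_map.1 hL
      exact (isSigmaCycle_iff σ _).1 M.2.1
    · intro c
      rw [Multiset.map_map]
      exact h1 c
    · rw [Multiset.map_map, Multiset.map_map]
      rfl
  · rintro ⟨Ls, ⟨h1, h2⟩, h3⟩
    lift Ls to Multiset {L : List (Copies α) //
      IsSigmaCycle σ L ∧ IsLoop src tgt (L.map Sigma.fst)} using
      fun L hL => ⟨(isSigmaCycle_iff σ _).2 (h1 L hL), cyc_isLoop σ L (h1 L hL)⟩
    refine ⟨Ls, ?_, ?_⟩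
    · intro c
      have := h2 c
      rw [Multiset.map_map] at this
      exact this
    · apply Multiset.map_injective toCyc_inj
      rw [h3, Multiset.map_map, Multiset.map_map]
      rfl

theorem lift_loops {V E : Type*} {src tgt : E → V} {α : E → ℕ}
    (σ : MatchingFamily src tgt α) (Ls : Multiset (List (Copies α)))
    (h : ∀ L ∈ Ls, Cyc (succCopy σ) L) :
    ∃ μ : MultiLoop src tgt,
      μ.map toCyc = Ls.map (fun L => ((L.map Sigma.fst : List E) : Cycle E)) := by
  lift Ls to Multiset {L : List (Copies α) // Cyc (succCopy σ) L} using h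
  refine ⟨Ls.map fun L => Loop.mk src tgt (L.1.map Sigma.fst) (cyc_isLoop σ _ L.2), ?_⟩
  rw [Multiset.map_map, Multiset.map_map]
  rfl

theorem path_same {X : Type*} (f : X → X) (x : X) (A B : List X) (y : X)
    (hA : Path f x A y) (hB : Path f x B x) (hn : A.Nodup) (hy : y = x)
    (hBn : B.Nodup) (hA0 : A ≠ []) (hB0 : B ≠ []) : A = B := by
  have key : ∀ (A B : List X) (z : X), Path f z A x → Path f z B x →
      (x ∉ A.tail) → (x ∉ B.tail) → A ≠ [] → B ≠ [] → A = B := by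
    intro A
    induction A with
    | nil => intro B z _ _ _ _ h; exact absurd rfl h
    | cons a A ih =>
      intro B z h1 h2 h3 h4 _ h5
      cases B with
      | nil => exact absurd rfl h5
      | cons b B =>
        obtain ⟨rfl, h1⟩ := h1
        obtain ⟨rfl, h2⟩ := h2
        simp only [List.tail_cons] at h3 h4
        cases A with
        | nil =>
          cases B with
          | nil => rfl
          | cons b' B =>
            have e1 : f b = x := h1
            have e2 : b' = f b := h2.1
            exact absurd (by simp [e2, e1]) h4
        | cons a' A =>
          cases B with
          | nil =>
            have e1 : f b = x := h2
            have e2 : a' = f b := h1.1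
            exact absurd (by simp [e2, e1]) h3
          | cons b' B =>
            rw [ih (b' :: B) _ h1 h2 (fun h => h3 (List.mem_cons_of_mem _ h))
              (fun h => h4 (List.mem_cons_of_mem _ h)) (by simp) (by simp)]
  subst hy
  refine key A B _ hA hB ?_ ?_ hA0 hB0
  · cases A with
    | nil => simp
    | cons a A =>
      have := hA.1
      subst this
      exact (List.nodup_cons.1 hn).1
  · cases B with
    | nil => simp
    | cons a A =>
      have := hB.1
      subst this
      exact (List.nodup_cons.1 hBn).1

theorem cyc_start {X : Type*} {f : X → X} {L : List X} (h : Cyc f L) {x : X} (hx : x ∈ L) :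
    ∃ M, L ~r M ∧ Path f x M x ∧ M ≠ [] := by
  obtain ⟨s, t, rfl⟩ := List.append_of_mem hx
  refine ⟨(x :: t) ++ s, List.isRotated_append, ?_, by simp⟩
  obtain ⟨_, y, hy⟩ := cyc_comm h
  have : x = y := hy.1
  subst this
  exact hy

theorem cyc_rot {X : Type*} {f : X → X} {L M : List X} (h : Cyc f L) (h' : Cyc f M)
    (hn : L.Nodup) (hn' : M.Nodup) {x : X} (hx : x ∈ L) (hx' : x ∈ M) : L ~r M := by
  obtain ⟨A, hA, hA1, hA2⟩ := cyc_start h hx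
  obtain ⟨B, hB, hB1, hB2⟩ := cyc_start h' hx'
  have := path_same f x A B x hA1 hB1 (hA.nodup_iff.1 hn) rfl (hB.nodup_iff.1 hn') hA2 hB2
  subst this
  exact hA.trans hB.symm

theorem exists_mem {X : Type*} [DecidableEq X] {Ls : Multiset (List X)} {c : X}
    (h : (Ls.map (fun L => L.count c)).sum ≠ 0) : ∃ L ∈ Ls, c ∈ L := by
  by_contra hh
  push Not at hh
  apply h
  apply Multiset.sum_eq_zero
  intro n hn
  obtain ⟨L, hL, rfl⟩ := Multiset.mem_map.1 hn
  exact List.count_eq_zero.2 (hh L hL)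

theorem uniq {X : Type*} [DecidableEq X] (f : X → X) (Ls Ms : Multiset (List X))
    (h1 : ∀ L ∈ Ls, Cyc f L) (h2 : ∀ L ∈ Ms, Cyc f L)
    (h3 : ∀ c, (Ls.map (fun L => L.count c)).sum = (Ms.map (fun L => L.count c)).sum)
    (h4 : ∀ c, (Ls.map (fun L => L.count c)).sum ≤ 1) :
    Ls.map (fun L : List X => (L : Cycle X)) = Ms.map (fun L : List X => (L : Cycle X)) := by
  induction Ls using Multiset.induction_on generalizing Ms with
  | empty =>
    have : Ms = 0 := by
      apply Multiset.eq_zero_of_forall_notMem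
      intro L hL
      obtain ⟨M, rfl⟩ := Multiset.exists_cons_of_mem hL
      obtain ⟨x, hx⟩ := List.exists_mem_of_ne_nil L (h2 L hL).1
      have h5 := h3 x
      have h6 := List.count_pos_iff.2 hx
      simp only [Multiset.map_zero, Multiset.sum_zero, Multiset.map_cons, Multiset.sum_cons] at h5
      omega
    subst this; rfl
  | cons L R ih =>
    have hL := h1 L (by simp)
    obtain ⟨x, hx⟩ := List.exists_mem_of_ne_nil L hL.1
    have hx1 := List.count_pos_iff.2 hx
    obtain ⟨M, hM, hxM⟩ : ∃ M ∈ Ms, x ∈ M := by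
      apply exists_mem
      rw [← h3 x]
      simp only [Multiset.map_cons, Multiset.sum_cons]
      omega
    have hMc := h2 M hM
    obtain ⟨S, rfl⟩ := Multiset.exists_cons_of_mem hM
    simp only [Multiset.map_cons, Multiset.sum_cons] at h3 h4 ⊢
    have hr : L ~r M := by
      refine cyc_rot hL hMc ?_ ?_ hx hxM
      · rw [List.nodup_iff_count_le_one]
        intro c; have := h4 c; omega
      · rw [List.nodup_iff_count_le_one]
        intro c; have := h4 c; have := h3 c; omega
    rw [Cycle.coe_eq_coe.2 hr, ih S (fun L hL => h1 L (by simp [hL]))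
      (fun L hL => h2 L (by simp [hL]))]
    · intro c
      have := h3 c
      have := hr.perm.count_eq c
      omega
    · intro c
      have := h4 c
      omega

theorem traces_uniq {V E : Type*} [DecidableEq E] {src tgt : E → V} {α : E → ℕ}
    {σ : MatchingFamily src tgt α} {μ : MultiLoop src tgt} (h : Traces σ μ)
    {Ls : Multiset (List (Copies α))} (hT : T (succCopy σ) Ls) :
      μ.map toCyc = Ls.map (fun L => ((L.map Sigma.fst : List E) : Cycle E)) := by
  obtain ⟨Ms, hM, h⟩ := (traces_iff σ μ).1 h
  rw [h]
  have := uniq (succCopy σ) Ms Ls hM.1 hT.1 (fun c => by rw [hM.2, hT.2]) (fun c => (hM.2 c).le)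
  have := congrArg (Multiset.map (Cycle.map Sigma.fst)) this
  rw [Multiset.map_map, Multiset.map_map] at this
  exact this

theorem path_iter {X : Type*} (f : X → X) (x : X) (n : ℕ) :
    Path f x (List.iterate f x n) (f^[n] x) := by
  induction n generalizing x with
  | zero => rfl
  | succ n ih => exact ⟨rfl, ih (f x)⟩

theorem exists_T {X : Type*} [DecidableEq X] [Fintype X] (f : X → X)
    (hf : Function.Injective f) : ∃ Ls, T f Ls := by
  classical
  let p : Equiv.Perm X := Equiv.ofBijective f (Finite.injective_iff_bijective.1 hf)
  have hp : ∀ x, x ∈ Function.periodicPts f := fun x => hf.mem_periodicPts x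
  let l : X → List X := fun x => List.iterate f x (Function.minimalPeriod f x)
  refine ⟨(Finset.univ : Finset (Quotient (Equiv.Perm.SameCycle.setoid p))).val.map
    (fun q => l q.out), ?_, ?_⟩
  · intro L hL
    obtain ⟨q, _, rfl⟩ := Multiset.mem_map.1 hL
    have h0 := Function.minimalPeriod_pos_of_mem_periodicPts (hp q.out)
    refine ⟨?_, q.out, ?_⟩
    · intro h
      have := congrArg List.length h
      simp [l] at this
      omega
    · have := path_iter f q.out (Function.minimalPeriod f q.out)
      rwa [Function.iterate_minimalPeriod] at this
  · intro c
    rw [Multiset.map_map]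
    change ∑ q : Quotient (Equiv.Perm.SameCycle.setoid p), (l q.out).count c = 1
    have hc : ∀ x, (l x).count c = if p.SameCycle x c then 1 else 0 := by
      intro x
      have hnd : (l x).Nodup := by
        have := Function.nodup_periodicOrbit (f := f) (x := x)
        rw [Function.periodicOrbit, Cycle.nodup_coe_iff] at this
        simpa [l, List.range_map_iterate] using this
      rw [hnd.count]
      refine if_congr ?_ rfl rfl
      have h1 : c ∈ l x ↔ ∃ n, f^[n] x = c := by
        have := Function.mem_periodicOrbit_iff (f := f) (y := c) (hp x)
        rw [Function.periodicOrbit, Cycle.mem_coe_iff] at this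
        simpa [l, List.range_map_iterate] using this
      rw [h1]
      constructor
      · rintro ⟨n, h⟩
        refine ⟨n, ?_⟩
        rw [zpow_natCast, ← Equiv.Perm.iterate_eq_pow]
        exact h
      · intro h
        obtain ⟨n, _, h⟩ := h.exists_pow_eq'
        refine ⟨n, ?_⟩
        rw [← Equiv.Perm.iterate_eq_pow] at h
        exact h
    simp_rw [hc]
    rw [Finset.sum_eq_single (Quotient.mk (Equiv.Perm.SameCycle.setoid p) c)]
    · rw [if_pos]
      exact Quotient.exact (s := Equiv.Perm.SameCycle.setoid p) (Quotient.out_eq _)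
    · intro q _ hq
      rw [if_neg]
      intro h
      apply hq
      rw [← Quotient.out_eq q]
      exact Quotient.sound (s := Equiv.Perm.SameCycle.setoid p) h
    · simp

theorem succ_inj {V E : Type*} {src tgt : E → V} {α : E → ℕ}
    (σ : MatchingFamily src tgt α) : Function.Injective (succCopy σ) := by
  intro c d h
  have h1 : tgt c.1 = tgt d.1 := by rw [← src_succ σ c, ← src_succ σ d, h]
  have key : ∀ (v : V) (hc : tgt c.1 = v) (hd : tgt d.1 = v),
      (σ v ⟨c, hc⟩).1 = (σ v ⟨d, hd⟩).1 → c = d := by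
    intro v hc hd h
    have := (σ v).injective (Subtype.ext h)
    exact congrArg Subtype.val this
  apply key _ rfl h1.symm
  unfold succCopy at h
  rw [h]
  have : ∀ (v : V) (hd : tgt d.1 = v), (σ (tgt d.1) ⟨d, rfl⟩).1 = (σ v ⟨d, hd⟩).1 := by
    rintro v rfl; rfl
  exact this _ _

theorem succ_at {V E : Type*} {src tgt : E → V} {α : E → ℕ}
    (σ : MatchingFamily src tgt α) (v : V) (c : InCopies tgt α v) :
    succCopy σ c.1 = (σ v c).1 := by
  obtain ⟨c, rfl⟩ := c
  rfl

theorem count_fst {E : Type*} [DecidableEq E] {α : E → ℕ} (L : List (Copies α)) (e : E) :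
    (L.map Sigma.fst).count e = ∑ k : Fin (α e), L.count ⟨e, k⟩ := by
  induction L with
  | nil => simp
  | cons c L ih =>
    simp only [List.map_cons, List.count_cons, ih, Finset.sum_add_distrib]
    congr 1
    obtain ⟨e', k'⟩ := c
    by_cases h : e' = e
    · subst h
      simp
    · simp [h]

theorem sum_swap {Y : Type*} (Ls : Multiset Y) (n : ℕ) (g : Y → Fin n → ℕ) :
    (Ls.map (fun L => ∑ k, g L k)).sum = ∑ k, (Ls.map (fun L => g L k)).sum := by
  induction Ls using Multiset.induction_on with
  | empty => simp
  | cons L R ih => simp [ih, Finset.sum_add_distrib]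

theorem part_a2 {V E : Type*} [DecidableEq E] {src tgt : E → V} {α : E → ℕ}
    (σ : MatchingFamily src tgt α) (μ : MultiLoop src tgt) (h : Traces σ μ) (e : E) :
    MultiLoop.edgeCount μ e = α e := by
  obtain ⟨Ls, h1, rfl⟩ := h
  unfold MultiLoop.edgeCount
  rw [Multiset.map_map]
  change (Ls.map (fun L => (L.1.map Sigma.fst).count e)).sum = _
  simp_rw [count_fst]
  rw [sum_swap]
  simp [h1]

theorem cyc_glue {X : Type*} {f g : X → X} {a b : X} {A B : List X}
    (ha : a ∉ A) (hb : b ∉ A) (ha' : a ∉ B) (hb' : b ∉ B)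
    (hga : g a = f b) (hgb : g b = f a) (hg : ∀ c, c ≠ a → c ≠ b → g c = f c) :
    Cyc f ((A ++ [a]) ++ (B ++ [b])) ↔ Cyc g (A ++ [a]) ∧ Cyc g (B ++ [b]) := by
  have pA := path_congr g f A (fun c hc => hg c (by grind) (by grind))
  have pB := path_congr g f B (fun c hc => hg c (by grind) (by grind))
  simp only [Cyc, path_append, Path, pA, pB]
  constructor
  · rintro ⟨_, x, z, ⟨_, h1, rfl, rfl⟩, _, h2, rfl, rfl⟩
    exact ⟨⟨by simp, f b, a, h1, rfl, hga⟩, ⟨by simp, f a, b, h2, rfl, hgb⟩⟩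
  · rintro ⟨⟨_, x, _, h1, rfl, h2⟩, ⟨_, y, _, h3, rfl, h4⟩⟩
    refine ⟨by simp, x, y, ⟨a, h1, rfl, ?_⟩, b, h3, rfl, ?_⟩
    · rw [← hgb, h4]
    · rw [← hga, h2]

theorem count_split {X : Type*} [DecidableEq X] (L M : List X) (R : Multiset (List X)) (c : X) :
    (((L ++ M) ::ₘ R).map (fun L => L.count c)).sum =
    ((L ::ₘ M ::ₘ R).map (fun L => L.count c)).sum := by
  simp [add_assoc]

theorem T_glue {X : Type*} [DecidableEq X] {f g : X → X} {a b : X} (hab : a ≠ b) {A B : List X}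
    {R : Multiset (List X)}
    (hga : g a = f b) (hgb : g b = f a) (hg : ∀ c, c ≠ a → c ≠ b → g c = f c) :
    T f (((A ++ [a]) ++ (B ++ [b])) ::ₘ R) ↔ T g ((A ++ [a]) ::ₘ (B ++ [b]) ::ₘ R) := by
  unfold T
  simp_rw [count_split]
  refine and_congr_left fun hc => ?_
  have hca := hc a
  have hcb := hc b
  simp [hab, hab.symm] at hca hcb
  have ha : a ∉ A := by rw [← List.count_eq_zero]; omega
  have ha' : a ∉ B := by rw [← List.count_eq_zero]; omega
  have hb : b ∉ A := by rw [← List.count_eq_zero]; omega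
  have hb' : b ∉ B := by rw [← List.count_eq_zero]; omega
  have hR : ∀ L ∈ R, a ∉ L ∧ b ∉ L := by
    intro L hL
    obtain ⟨S, rfl⟩ := Multiset.exists_cons_of_mem hL
    simp at hca hcb
    constructor
    · rw [← List.count_eq_zero]; omega
    · rw [← List.count_eq_zero]; omega
  have hR' : ∀ L ∈ R, (Cyc f L ↔ Cyc g L) := by
    intro L hL
    have pL := path_congr g f L (fun c hc => hg c
      (fun h => (hR L hL).1 (h ▸ hc)) (fun h => (hR L hL).2 (h ▸ hc)))
    simp only [Cyc, pL]
  simp only [Multiset.forall_mem_cons, cyc_glue ha hb ha' hb' hga hgb hg, and_assoc]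
  refine and_congr_right fun _ => and_congr_right fun _ => ?_
  exact forall_congr' fun L => ⟨fun h hL => (hR' L hL).1 (h hL), fun h hL => (hR' L hL).2 (h hL)⟩

theorem T_rot {X : Type*} [DecidableEq X] {f : X → X} {a : X} {Ls : Multiset (List X)}
    {L : List X} (h : T f (L ::ₘ Ls)) (ha : a ∈ L) : ∃ A, T f ((A ++ [a]) ::ₘ Ls) ∧
      ∀ x ∈ L, x ∈ A ++ [a] := by
  obtain ⟨s, t, rfl⟩ := List.append_of_mem ha
  refine ⟨t ++ s, ⟨?_, ?_⟩, ?_⟩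
  · have h1 := h.1
    simp only [Multiset.forall_mem_cons] at h1 ⊢
    refine ⟨?_, h1.2⟩
    rw [List.append_assoc]
    apply cyc_comm
    simpa using h1.1
  · intro c
    rw [← h.2 c]
    simp [List.count_cons]
    omega
  · intro x; simp; tauto

theorem T_cases {X : Type*} [DecidableEq X] {f : X → X} {a b : X} (hab : a ≠ b)
    {Ls : Multiset (List X)} (h : T f Ls) :
    (∃ A B R, T f (((A ++ [b]) ++ (B ++ [a])) ::ₘ R)) ∨
    (∃ A B R, T f ((A ++ [a]) ::ₘ (B ++ [b]) ::ₘ R)) := by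
  obtain ⟨L, hL, haL⟩ := exists_mem (Ls := Ls) (c := a) (by rw [h.2]; simp)
  obtain ⟨R, rfl⟩ := Multiset.exists_cons_of_mem hL
  obtain ⟨A, hA, _⟩ := T_rot h haL
  by_cases hbA : b ∈ A
  · obtain ⟨s, t, rfl⟩ := List.append_of_mem hbA
    left
    refine ⟨s, t, R, ?_⟩
    simpa using hA
  · right
    have hb := hA.2 b
    simp [List.count_eq_zero.2 hbA, hab] at hb
    obtain ⟨M, hM, hbM⟩ := exists_mem (Ls := R) (c := b) (by rw [hb]; simp)
    obtain ⟨S, rfl⟩ := Multiset.exists_cons_of_mem hM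
    rw [Multiset.cons_swap] at hA
    obtain ⟨B, hB, _⟩ := T_rot hA hbM
    rw [Multiset.cons_swap] at hB
    exact ⟨A, B, S, hB⟩

theorem res {V E : Type*} [DecidableEq E] {src tgt : E → V} {α : E → ℕ}
    (σ σ' : MatchingFamily src tgt α) (v : V) (a b : Copies α) (ha : tgt a.1 = v)
    {A B : List (Copies α)} {R : Multiset (List (Copies α))}
    (hT : T (succCopy σ) (((A ++ [a]) ++ (B ++ [b])) ::ₘ R))
    (hT' : T (succCopy σ') ((A ++ [a]) ::ₘ (B ++ [b]) ::ₘ R))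
    {μ μ' : MultiLoop src tgt} (h : Traces σ μ) (h' : Traces σ' μ') : ResolutionAt v μ' μ := by
  have e1 := traces_uniq h hT
  have e2 := traces_uniq h' hT'
  have c1 := hT.1
  have c2 := hT'.1
  simp only [Multiset.forall_mem_cons] at c1 c2
  obtain ⟨μ₀, h0⟩ := lift_loops σ R c1.2
  have l0 := cyc_isLoop _ _ c1.1
  have l1 := cyc_isLoop _ _ c2.1
  have l2 := cyc_isLoop _ _ c2.2.1
  rw [List.map_append] at l0
  refine ⟨_, _, l1, l2, l0, μ₀, ⟨a.1, by simp, ha⟩, ?_, ?_, ?_⟩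
  · obtain ⟨_, x, hx⟩ := c1.1
    rw [path_append] at hx
    obtain ⟨z, h1, h2⟩ := hx
    rw [path_append] at h1
    obtain ⟨_, _, rfl, h3⟩ := h1
    have h3 : succCopy σ a = z := h3
    refine ⟨z.1, ?_, ?_⟩
    · cases B with
      | nil => have : b = z := h2.1
               simp [this]
      | cons y B => have : y = z := h2.1
                    simp [this]
    · rw [← h3, src_succ σ a, ha]
  · apply Multiset.map_injective toCyc_inj
    rw [e2]
    simp only [Multiset.map_cons, h0, toCyc_mk]
  · apply Multiset.map_injective toCyc_inj
    rw [e1]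
    simp only [Multiset.map_cons, h0, toCyc_mk, List.map_append]

theorem part_c {V E : Type*} [DecidableEq V] [DecidableEq E] {src tgt : E → V} {α : E → ℕ}
    (σ σ' : MatchingFamily src tgt α) (v : V)
    (h1 : ∃ a b : InCopies tgt α v, a ≠ b ∧ σ' v = (Equiv.swap a b).trans (σ v))
    (h2 : ∀ w : V, w ≠ v → σ' w = σ w)
    (μ μ' : MultiLoop src tgt) (h : Traces σ μ) (h' : Traces σ' μ') :
    ResolutionAt v μ μ' ∨ ResolutionAt v μ' μ := by
  obtain ⟨a, b, hab, hs⟩ := h1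
  have hab' : a.1 ≠ b.1 := fun h => hab (Subtype.ext h)
  have hga : succCopy σ' a.1 = succCopy σ b.1 := by
    rw [succ_at, succ_at, hs]; simp
  have hgb : succCopy σ' b.1 = succCopy σ a.1 := by
    rw [succ_at, succ_at, hs]; simp
  have hg : ∀ c, c ≠ a.1 → c ≠ b.1 → succCopy σ' c = succCopy σ c := by
    intro c hca hcb
    by_cases hv : tgt c.1 = v
    · have e1 := succ_at σ' v ⟨c, hv⟩
      have e2 := succ_at σ v ⟨c, hv⟩
      simp only at e1 e2
      rw [e1, e2, hs, Equiv.trans_apply, Equiv.swap_apply_of_ne_of_ne]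
      · intro h; exact hca (congrArg Subtype.val h)
      · intro h; exact hcb (congrArg Subtype.val h)
    · unfold succCopy
      rw [h2 _ hv]
  obtain ⟨Ls, hT, _⟩ := (traces_iff σ μ).1 h
  rcases T_cases hab' hT with ⟨A, B, R, hT⟩ | ⟨A, B, R, hT⟩
  · right
    have hT' := (T_glue hab'.symm hgb hga (fun c h1 h2 => hg c h2 h1)).1 hT
    exact res σ σ' v _ _ b.2 hT hT' h h'
  · left
    have hT' := (T_glue (f := succCopy σ') (g := succCopy σ) hab' hgb.symm hga.symm
      (fun c h1 h2 => (hg c h1 h2).symm)).2 hT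
    exact res σ' σ v _ _ a.2 hT' hT h' h

theorem count_fin {E : Type*} [DecidableEq E] (l : List E) (e : E) :
    (∑ i : Fin l.length, if l.get i = e then 1 else 0) = l.count e := by
  induction l with
  | nil => simp
  | cons a l ih =>
    rw [List.count_cons, ← ih]
    have := Fin.sum_univ_succ (n := l.length)
      (fun i : Fin (l.length + 1) => if (a :: l).get i = e then 1 else 0)
    refine Eq.trans this ?_
    simp only [beq_iff_eq, add_comm]
    rfl

theorem val_rot {n : ℕ} (i : Fin n) : (finRotate n i).1 = (i.1 + 1) % n := by
  cases n with
  | zero => exact i.elim0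
  | succ n => rw [finRotate_succ_apply]; simp [Fin.val_add]

theorem count_ofFn' {X : Type*} [DecidableEq X] {n : ℕ} (g : Fin n → X) (c : X) :
    (List.ofFn g).count c = ∑ i, if g i = c then 1 else 0 := by
  induction n with
  | zero => simp
  | succ n ih =>
    rw [List.ofFn_succ, List.count_cons, ih, Fin.sum_univ_succ, add_comm]
    simp

theorem part_b {V E : Type*} [Fintype E] [DecidableEq V] [DecidableEq E] {src tgt : E → V}
    {α : E → ℕ} (μ : MultiLoop src tgt) (hμ : ∀ e : E, MultiLoop.edgeCount μ e = α e) :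
    ∃ σ : MatchingFamily src tgt α, Traces σ μ := by
  obtain ⟨M, rfl⟩ : ∃ M : Multiset {l : List E // IsLoop src tgt l},
      μ = M.map (fun l => Loop.mk src tgt l.1 l.2) := by
    obtain ⟨M, hM⟩ := Multiset.map_surjective_of_surjective
      (f := fun l : {l : List E // IsLoop src tgt l} => Loop.mk src tgt l.1 l.2)
      (fun c => by obtain ⟨l⟩ := c; exact ⟨l, rfl⟩) μ
    exact ⟨M, hM.symm⟩
  obtain ⟨m, rfl⟩ : ∃ m : List {l : List E // IsLoop src tgt l}, M = (m : Multiset _) :=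
    ⟨M.toList, M.coe_toList.symm⟩
  let P := Σ j : Fin m.length, Fin (m.get j).1.length
  let ed : P → E := fun p => (m.get p.1).1.get p.2
  have hcard : ∀ e, Fintype.card {p : P // ed p = e} = α e := by
    intro e
    rw [← hμ e, Fintype.card_subtype, Finset.card_filter, Fintype.sum_sigma]
    simp only [ed, count_fin]
    unfold MultiLoop.edgeCount
    rw [Multiset.map_map]
    change _ = (m.map (fun l => l.1.count e)).sum
    rw [← List.sum_ofFn]
    congr 1
    apply List.ext_getElem <;> simp
  let φ : P ≃ Copies α := (Equiv.sigmaFiberEquiv ed).symm.trans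
    (Equiv.sigmaCongrRight fun e => Fintype.equivFinOfCardEq (hcard e))
  have hφ : ∀ p, (φ p).1 = ed p := fun p => rfl
  let r : Equiv.Perm P := Equiv.sigmaCongrRight fun j => finRotate _
  have hrr : ∀ (j : Fin m.length) (i : Fin (m.get j).1.length),
      r ⟨j, i⟩ = ⟨j, ⟨(i.1 + 1) % (m.get j).1.length,
        Nat.mod_lt _ (lt_of_le_of_lt (Nat.zero_le _) i.isLt)⟩⟩ := by
    intro j i
    exact Sigma.ext rfl (heq_of_eq (Fin.ext (val_rot i)))
  have hr : ∀ p : P, src (ed (r p)) = tgt (ed p) := by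
    rintro ⟨j, i⟩
    have := (m.get j).2.2 i
    refine Eq.trans ?_ this.symm
    rw [hrr]
  let F : Equiv.Perm (Copies α) := (φ.symm.trans r).trans φ
  have hF : ∀ c, src (F c).1 = tgt c.1 := by
    intro c
    obtain ⟨p, rfl⟩ := φ.surjective c
    change src (φ (r (φ.symm (φ p)))).1 = _
    rw [Equiv.symm_apply_apply, hφ, hφ, hr]
  let σ : MatchingFamily src tgt α := fun v => F.subtypeEquiv (fun c => by rw [hF])
  have hs : ∀ p, succCopy σ (φ p) = φ (r p) := by
    intro p
    change φ (r (φ.symm (φ p))) = _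
    rw [Equiv.symm_apply_apply]
  refine ⟨σ, (traces_iff _ _).2 ⟨(Finset.univ : Finset (Fin m.length)).val.map
    (fun j => List.ofFn (fun i => φ ⟨j, i⟩)), ⟨?_, ?_⟩, ?_⟩⟩
  · intro L hL
    replace hL := Multiset.mem_map.1 hL
    obtain ⟨j, _, rfl⟩ := hL
    rw [cyc_iff]
    constructor
    · have := (m.get j).2.1
      simpa using this
    · apply List.ext_getElem (by simp)
      intro i h1 h2
      simp only [List.getElem_map, List.getElem_ofFn, hs, List.getElem_rotate, hrr,
        List.length_ofFn]
  · intro c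
    rw [Multiset.map_map]
    change ∑ j : Fin m.length, (List.ofFn (fun i => φ ⟨j, i⟩)).count c = 1
    simp_rw [count_ofFn']
    rw [← Fintype.sum_sigma (f := fun p : P => if φ p = c then 1 else 0)]
    rw [Equiv.sum_comp φ (fun d => if d = c then 1 else 0)]
    simp
  · have hm : (m : Multiset _) = (Finset.univ : Finset (Fin m.length)).val.map m.get := by
      rw [Fin.univ_val_map, List.ofFn_get]
    rw [Multiset.map_map, Multiset.map_map]
    conv_lhs => rw [hm]
    rw [Multiset.map_map]
    refine Multiset.map_congr rfl fun j _ => ?_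
    simp only [Function.comp, toCyc_mk, List.map_ofFn, hφ]
    congr 1
    exact (List.ofFn_get _).symm
end MFM

/-- Let `α` satisfy the Kirchhoff condition. Then:
(a) every family of matchings traces out a unique multi-loop, and any multi-loop traced
by a family of matchings has edge multiplicity function `α`;
(b) every multi-loop with edge multiplicity function `α` is traced by some family of
matchings;
(c) if two families of matchings agree except that at a single vertex `v` they differ by
precomposition with a single transposition, then the multi-loops they trace are related
by a resolution at `v`. -/
theorem matching_family_multiloop {V E : Type*} [Fintype V] [Fintype E]
    [DecidableEq V] [DecidableEq E]
    (src tgt : E → V) (α : E → ℕ)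
    (hK : ∀ v : V,
      ∑ e ∈ Finset.univ.filter (fun e => tgt e = v), α e =
        ∑ e ∈ Finset.univ.filter (fun e => src e = v), α e) :
    -- (a)
    ((∀ σ : MatchingFamily src tgt α, ∃! μ : MultiLoop src tgt, Traces σ μ) ∧
      (∀ (σ : MatchingFamily src tgt α) (μ : MultiLoop src tgt), Traces σ μ →
        ∀ e : E, MultiLoop.edgeCount μ e = α e)) ∧
    -- (b)
    (∀ μ : MultiLoop src tgt, (∀ e : E, MultiLoop.edgeCount μ e = α e) →
      ∃ σ : MatchingFamily src tgt α, Traces σ μ) ∧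
    -- (c)
    (∀ (σ σ' : MatchingFamily src tgt α) (v : V),
      (∃ a b : InCopies tgt α v, a ≠ b ∧ σ' v = (Equiv.swap a b).trans (σ v)) →
      (∀ w : V, w ≠ v → σ' w = σ w) →
      ∀ μ μ' : MultiLoop src tgt, Traces σ μ → Traces σ' μ' →
        ResolutionAt v μ μ' ∨ ResolutionAt v μ' μ) := by
  refine ⟨⟨fun σ => ?_, MFM.part_a2⟩, MFM.part_b, MFM.part_c⟩
  obtain ⟨Ls, hT⟩ := MFM.exists_T (succCopy σ) (MFM.succ_inj σ)
  obtain ⟨μ, hμ⟩ := MFM.lift_loops σ Ls hT.1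
  refine ⟨μ, (MFM.traces_iff σ μ).2 ⟨Ls, hT, hμ⟩, fun ν hν => ?_⟩
  apply Multiset.map_injective MFM.toCyc_inj
  rw [hμ, MFM.traces_uniq hν hT]
end

section
/- Let X be a set, let S be a set each of whose elements is labelled either 'red' or 'blue', and suppose that for each s ∈ S we are given subsets D_s, R_s ⊆ X with D_s ∩ R_s = ∅ together with a bijection f_s : D_s → R_s. Assume: (i) every x ∈ X lies in D_s ∪ R_s for only finitely many s ∈ S; (ii) for all distinct s, s' ∈ S, f_s maps D_s ∩ D_{s'} onto R_s ∩ D_{s'} and maps D_s ∩ R_{s'} onto R_s ∩ R_{s'}; and (iii) for all distinct s, s' ∈ S and every x ∈ D_s ∩ D_{s'}, one has f_s(f_{s'}(x)) = f_{s'}(f_s(x)). Let V be the 𝔽₂-vector space with basis X and define the linear map ∂ : V → V on basis elements by ∂x = Σ_{s red, x ∈ D_s} f_s(x) + Σ_{s blue, x ∈ R_s} f_s^{-1}(x). Then ∂ ∘ ∂ = 0, so (V, ∂) is a chain complex. -/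
/-- Let `X` be a set and `S` a set of "sectors", each coloured red
(`color s = true`) or blue (`color s = false`), with disjoint subsets `D s, R s ⊆ X` and
a bijection `f s : D s → R s` (with inverse `g s`) for each `s`.  Assume each `x ∈ X`
lies in `D s ∪ R s` for only finitely many `s`, that for distinct `s, s'` the map `f s`
sends `D s ∩ D s'` onto `R s ∩ D s'` and `D s ∩ R s'` onto `R s ∩ R s'`, and that the
maps `f s`, `f s'` commute on `D s ∩ D s'`.  Then the linear endomorphism `d` of the
`𝔽₂`-vector space with basis `X` defined on basis elements by
`d x = Σ_{s red, x ∈ D s} f s x + Σ_{s blue, x ∈ R s} g s x` satisfies `d ∘ d = 0`. -/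
theorem strumming_differential_squares_to_zero
    {X S : Type*} (color : S → Bool) (D R : S → Set X) (f g : S → X → X)
    (hdisj : ∀ s : S, D s ∩ R s = ∅)
    (hf : ∀ s : S, ∀ x ∈ D s, f s x ∈ R s ∧ g s (f s x) = x)
    (hg : ∀ s : S, ∀ x ∈ R s, g s x ∈ D s ∧ f s (g s x) = x)
    (hfin : ∀ x : X, {s : S | x ∈ D s ∪ R s}.Finite)
    (hinter : ∀ s s' : S, s ≠ s' →
      f s '' (D s ∩ D s') = R s ∩ D s' ∧ f s '' (D s ∩ R s') = R s ∩ R s')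
    (hcomm : ∀ s s' : S, s ≠ s' → ∀ x ∈ D s ∩ D s', f s (f s' x) = f s' (f s x))
    (d : (X →₀ ZMod 2) →ₗ[ZMod 2] (X →₀ ZMod 2))
    (hd : ∀ x : X,
      d (Finsupp.single x 1) =
        (∑ᶠ s ∈ {s : S | color s = true ∧ x ∈ D s},
            Finsupp.single (f s x) (1 : ZMod 2)) +
          ∑ᶠ s ∈ {s : S | color s = false ∧ x ∈ R s},
            Finsupp.single (g s x) (1 : ZMod 2)) :
    ∀ m : X →₀ ZMod 2, d (d m) = 0 := by
  classical
  have M : ∀ s s' : S, s ≠ s' → ∀ x ∈ D s,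
      (f s x ∈ D s' ↔ x ∈ D s') ∧ (f s x ∈ R s' ↔ x ∈ R s') := by
    intro s s' hs x hx
    obtain ⟨h1, h2⟩ := hinter s s' hs
    refine ⟨⟨fun h => ?_, fun h => ?_⟩, ⟨fun h => ?_, fun h => ?_⟩⟩
    · have : f s x ∈ f s '' (D s ∩ D s') := h1 ▸ ⟨(hf s x hx).1, h⟩
      obtain ⟨y, hy, e⟩ := this
      have : y = x := by rw [← (hf s y hy.1).2, e, (hf s x hx).2]
      exact this ▸ hy.2
    · have : f s x ∈ R s ∩ D s' := h1 ▸ ⟨x, ⟨hx, h⟩, rfl⟩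
      exact this.2
    · have : f s x ∈ f s '' (D s ∩ R s') := h2 ▸ ⟨(hf s x hx).1, h⟩
      obtain ⟨y, hy, e⟩ := this
      have : y = x := by rw [← (hf s y hy.1).2, e, (hf s x hx).2]
      exact this ▸ hy.2
    · have : f s x ∈ R s ∩ R s' := h2 ▸ ⟨x, ⟨hx, h⟩, rfl⟩
      exact this.2
  have M' : ∀ s s' : S, s ≠ s' → ∀ x ∈ R s,
      (g s x ∈ D s' ↔ x ∈ D s') ∧ (g s x ∈ R s' ↔ x ∈ R s') := by
    intro s s' hs x hx
    have := M s s' hs (g s x) (hg s x hx).1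
    rw [(hg s x hx).2] at this
    exact ⟨this.1.symm, this.2.symm⟩
  have hdj : ∀ s x, x ∈ D s → x ∈ R s → False := by
    intro s x h1 h2
    have : x ∈ D s ∩ R s := ⟨h1, h2⟩
    rw [hdisj] at this
    exact this
  -- mixed commutation
  have C2 : ∀ s s' : S, s ≠ s' → ∀ x, x ∈ D s → x ∈ R s' →
      f s (g s' x) = g s' (f s x) := by
    intro s s' hs x h1 h2
    have hy := hg s' x h2
    have hyD : g s' x ∈ D s := (M' s' s hs.symm x h2).1.2 h1
    have := hcomm s s' hs (g s' x) ⟨hyD, hy.1⟩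
    rw [hy.2] at this
    rw [this, (hf s' _ ((M s s' hs _ hyD).1.2 hy.1)).2]
  have C3 : ∀ s s' : S, s ≠ s' → ∀ x, x ∈ R s → x ∈ R s' →
      g s (g s' x) = g s' (g s x) := by
    intro s s' hs x h1 h2
    have hz := hg s x h1
    have hzR : g s x ∈ R s' := (M' s s' hs x h1).2.2 h2
    have := C2 s s' hs (g s x) hz.1 hzR
    rw [hz.2] at this
    rw [← this, (hf s _ ((M' s' s hs.symm _ hzR).1.2 hz.1)).2]
  let A : S → Set X := fun s => if color s = true then D s else R s
  let h : S → X → X := fun s => if color s = true then f s else g s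
  have P1 : ∀ s x, x ∈ A s → h s x ∉ A s := by
    intro s x hx hx'
    by_cases c : color s = true
    · simp only [A, h, c, if_true] at hx hx'
      exact hdj _ _ hx' (hf s x hx).1
    · simp only [A, h, c, if_false] at hx hx'
      exact hdj _ _ (hg s x hx).1 hx'
  have P2 : ∀ s s', s ≠ s' → ∀ x, x ∈ A s → (h s x ∈ A s' ↔ x ∈ A s') := by
    intro s s' hs x hx
    by_cases c : color s = true <;> by_cases c' : color s' = true <;>
      simp only [A, h, c, c', if_true, if_false] at hx ⊢
    · exact (M s s' hs x hx).1
    · exact (M s s' hs x hx).2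
    · exact (M' s s' hs x hx).1
    · exact (M' s s' hs x hx).2
  have P3 : ∀ s s', s ≠ s' → ∀ x, x ∈ A s → x ∈ A s' → h s (h s' x) = h s' (h s x) := by
    intro s s' hs x hx hx'
    by_cases c : color s = true <;> by_cases c' : color s' = true <;>
      simp only [A, h, c, c', if_true, if_false] at hx hx' ⊢
    · exact hcomm s s' hs x ⟨hx, hx'⟩
    · exact C2 s s' hs x hx hx'
    · exact (C2 s' s hs.symm x hx' hx).symm
    · exact C3 s s' hs x hx hx'
  have hd' : ∀ (x : X) (T : Finset S), (∀ s, x ∈ A s → s ∈ T) →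
      d (Finsupp.single x 1) =
        ∑ s ∈ T, if x ∈ A s then Finsupp.single (h s x) (1 : ZMod 2) else 0 := by
    intro x T hT
    have e1 : ∀ s, (color s = true ∧ x ∈ D s) → s ∈ T := fun s hs =>
      hT s (by simp only [A, hs.1, if_true]; exact hs.2)
    have e2 : ∀ s, (color s = false ∧ x ∈ R s) → s ∈ T := fun s hs =>
      hT s (by simp only [A, hs.1]; exact hs.2)
    rw [hd x, finsum_mem_eq_sum_of_inter_support_eq (t := T.filter fun s => color s = true ∧ x ∈ D s),
      finsum_mem_eq_sum_of_inter_support_eq (t := T.filter fun s => color s = false ∧ x ∈ R s),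
      Finset.sum_filter, Finset.sum_filter, ← Finset.sum_add_distrib]
    · refine Finset.sum_congr rfl fun s _ => ?_
      by_cases c : color s = true
      · simp [A, h, c]
      · simp [A, h, c]
    · congr 1
      ext s
      simp only [Set.mem_setOf_eq, Finset.coe_filter]
      exact ⟨fun q => ⟨e2 s q, q⟩, fun q => q.2⟩
    · congr 1
      ext s
      simp only [Set.mem_setOf_eq, Finset.coe_filter]
      exact ⟨fun q => ⟨e1 s q, q⟩, fun q => q.2⟩
  have key : ∀ x, d (d (Finsupp.single x 1)) = 0 := by
    intro x
    have hF : {s | x ∈ A s}.Finite := (hfin x).subset (by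
      intro s hs
      simp only [A, Set.mem_setOf_eq] at hs
      split_ifs at hs
      · exact Or.inl hs
      · exact Or.inr hs)
    set T := hF.toFinset with hTd
    have hT : ∀ s, s ∈ T ↔ x ∈ A s := fun s => by simp [hTd]
    rw [hd' x T (fun s => (hT s).2), map_sum]
    have : ∀ s ∈ T, d (if x ∈ A s then Finsupp.single (h s x) (1 : ZMod 2) else 0) =
        ∑ s' ∈ T, if s = s' then 0 else Finsupp.single (h s' (h s x)) (1 : ZMod 2) := by
      intro s hs
      have hx := (hT s).1 hs
      rw [if_pos hx, hd' (h s x) T]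
      · refine Finset.sum_congr rfl fun s' hs' => ?_
        by_cases e : s = s'
        · subst e
          rw [if_neg (P1 s x hx), if_pos rfl]
        · rw [if_pos ((P2 s s' e x hx).2 ((hT s').1 hs')), if_neg e]
      · intro s' hs'
        by_cases e : s = s'
        · exact e ▸ hs
        · exact (hT s').2 ((P2 s s' e x hx).1 hs')
    rw [Finset.sum_congr rfl this, ← Finset.sum_product']
    refine Finset.sum_involution (fun p _ => p.swap) ?_ ?_ ?_ ?_
    · rintro ⟨a, b⟩ hp
      rw [Finset.mem_product] at hp
      by_cases e : a = b
      · simp [e]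
      · simp only [Prod.swap, if_neg e, if_neg (Ne.symm e)]
        rw [P3 a b e x ((hT a).1 hp.1) ((hT b).1 hp.2), ← Finsupp.single_add]
        rw [show (1 + 1 : ZMod 2) = 0 from rfl, Finsupp.single_zero]
    · rintro ⟨a, b⟩ hp hne e
      simp only [Prod.swap, Prod.mk.injEq] at e
      exact hne (if_pos e.2)
    · rintro ⟨a, b⟩ hp
      rw [Finset.mem_product] at hp ⊢
      exact ⟨hp.2, hp.1⟩
    · rintro ⟨a, b⟩ hp
      rfl
  have : d ∘ₗ d = 0 := by
    ext x : 2
    simpa using key x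
  intro m
  exact LinearMap.congr_fun this m
end
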